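/- arXiv:1011.0551 — 6 statements merged into one kernel-verified Lean document; each statement's English description precedes it below -/
import Mathlib

section
/- For every context-free language L over an alphabet Σ there exists a regular language L' over Σ such that Parikh(L) = Parikh(L'). -/
/-!
Only the *multiset* of rules used by a derivation matters for the Parikh image, and the multisets
of rules that come from a derivation of a terminal word are described by a system of linear
equations together with a connectivity condition.

Let `n` be a multiset of rules and `M` a multiset of nonterminals. There is a derivation that
starts from a sentential form with nonterminals `M`, uses exactly the rules `n` and leaves no
nonterminal if and only if

* balance: `M + outs n = inputs n`, so that every nonterminal is created as often as it is
  rewritten, and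
* connectivity: the left-hand side of every rule in `n` can be reached from `M` through rules of
  `n`.

Necessity is an easy induction (`exists_rules_of_derives`). Sufficiency (`derives_of_rules`) follows
by firing rules one at a time, provided the first rule is chosen so that connectivity survives
(`exists_firing`): for a nonterminal `X` of `M`, prefer a rule for `X` from whose right-hand side
`X` can be reached again. If there is none and `X` still has to be rewritten later, balance shows
that another copy of `X` is present or is created by a rule of `n` whose left-hand side is reached
without passing through `X`, so any rule for `X` will do.

Connectivity depends only on the set `R` of rules occurring in `n`. For each of the finitely many
`R`, balance is a linear equation in the multiplicities, whose solutions form a semilinear set.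
Semilinear sets are preserved by the additive map sending a multiset of rules to the letters it
produces and by finite unions, so the Parikh image of a context-free language is semilinear
(`isSemilinearSet_parikhImage`). Conversely every semilinear set of multisets is the Parikh image of
a regular language: a linear set `a + ⟨t⟩` is the image of `a t*`, which has finitely many left
quotients.
-/

/-- The Parikh image of a word: the multiset of its letters. -/
def parikh {α : Type} (w : List α) : Multiset α := (w : Multiset α)

/-- The Parikh image of a language. -/
def parikhImage {α : Type} (L : Language α) : Set (Multiset α) :=
  parikh '' L

open scoped Pointwise

namespace ParikhProof

variable {T N : Type}

/-! ### Realizable multisets of rules -/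

/-- The multiset of nonterminals of a sentential form. -/
def nts (u : List (Symbol T N)) : Multiset N :=
  (u.filterMap fun | .nonterminal A => some A | .terminal _ => none : List N)

/-- The multiset of letters of a sentential form. -/
def ters (u : List (Symbol T N)) : Multiset T :=
  (u.filterMap fun | .nonterminal _ => none | .terminal a => some a : List T)

lemma nts_append (u v : List (Symbol T N)) : nts (u ++ v) = nts u + nts v := by
  simp [nts]

lemma ters_append (u v : List (Symbol T N)) : ters (u ++ v) = ters u + ters v := by
  simp [ters]

lemma nts_nonterminal (A : N) : nts ([.nonterminal A] : List (Symbol T N)) = {A} := rfl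

lemma ters_nonterminal (A : N) : ters ([.nonterminal A] : List (Symbol T N)) = 0 := rfl

lemma nts_map_terminal (w : List T) : nts (w.map .terminal : List (Symbol T N)) = 0 := by
  induction w with
  | nil => rfl
  | cons a w ih => exact ih

lemma ters_map_terminal (w : List T) : ters (w.map .terminal : List (Symbol T N)) = parikh w := by
  induction w with
  | nil => rfl
  | cons a w ih => simp [ters, parikh]

lemma exists_split_of_mem_nts {u : List (Symbol T N)} {X : N} (h : X ∈ nts u) :
    ∃ p q, u = p ++ [.nonterminal X] ++ q := by
  have : Symbol.nonterminal X ∈ u := by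
    simp only [nts, Multiset.mem_coe, List.mem_filterMap] at h
    obtain ⟨s, hs, h⟩ := h
    cases s with
    | terminal a => simp at h
    | nonterminal A => simp at h; exact h ▸ hs
  obtain ⟨p, q, rfl⟩ := List.append_of_mem this
  exact ⟨p, q, by simp⟩

lemma eq_map_terminal_of_nts {u : List (Symbol T N)} (h : nts u = 0) :
    ∃ w : List T, u = w.map .terminal := by
  induction u with
  | nil => exact ⟨[], rfl⟩
  | cons s u ih =>
    cases s with
    | terminal a =>
      obtain ⟨w, rfl⟩ := ih (by simpa [nts] using h)
      exact ⟨a :: w, rfl⟩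
    | nonterminal A => simp [nts] at h

/-- The left-hand sides of a multiset of rules. -/
def inputs : Multiset (ContextFreeRule T N) →+ Multiset N :=
  Multiset.mapAddMonoidHom ContextFreeRule.input

/-- The nonterminals on the right-hand sides of a multiset of rules. -/
def outs : Multiset (ContextFreeRule T N) →+ Multiset N :=
  Multiset.sumAddMonoidHom.comp (Multiset.mapAddMonoidHom fun r => nts r.output)

/-- The letters on the right-hand sides of a multiset of rules. -/
def letters : Multiset (ContextFreeRule T N) →+ Multiset T :=
  Multiset.sumAddMonoidHom.comp (Multiset.mapAddMonoidHom fun r => ters r.output)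

lemma inputs_cons (r : ContextFreeRule T N) (n) : inputs (r ::ₘ n) = r.input ::ₘ inputs n := by
  simp [inputs]

lemma outs_cons (r : ContextFreeRule T N) (n) : outs (r ::ₘ n) = nts r.output + outs n := by
  simp [outs]

lemma letters_cons (r : ContextFreeRule T N) (n) :
    letters (r ::ₘ n) = ters r.output + letters n := by
  simp [letters]

lemma mem_inputs {n : Multiset (ContextFreeRule T N)} {X : N} :
    X ∈ inputs n ↔ ∃ r ∈ n, r.input = X := by
  simp [inputs]

lemma exists_of_mem_outs {n : Multiset (ContextFreeRule T N)} {X : N} (h : X ∈ outs n) :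
    ∃ r ∈ n, X ∈ nts r.output := by
  induction n using Multiset.induction_on with
  | empty => simp [outs] at h
  | cons r n ih =>
    rw [outs_cons, Multiset.mem_add] at h
    rcases h with h | h
    · exact ⟨r, by simp, h⟩
    · obtain ⟨q, hq, h⟩ := ih h
      exact ⟨q, by simp [hq], h⟩

/-- `Reach M R Y`: the nonterminal `Y` belongs to `M` or can be obtained from a member of `M` by
repeatedly passing from the left-hand side of a rule satisfying `R` to a nonterminal on its
right-hand side. -/
inductive Reach (M : Multiset N) (R : ContextFreeRule T N → Prop) : N → Prop
  | base {Y} : Y ∈ M → Reach M R Y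
  | step {r Y} : Reach M R r.input → R r → Y ∈ nts r.output → Reach M R Y

/-- Every left-hand side of a rule satisfying `R` is reachable from `M` through `R`. -/
def Conn (M : Multiset N) (R : ContextFreeRule T N → Prop) : Prop :=
  ∀ r, R r → Reach M R r.input

/-- Firing `r` preserves connectivity if its left-hand side stays reachable or is not needed any
more. -/
lemma conn_of_cons {r : ContextFreeRule T N} {n : Multiset (ContextFreeRule T N)} {M : Multiset N}
    (hc : Conn (r.input ::ₘ M) (· ∈ r ::ₘ n))
    (h : Reach (M + nts r.output) (· ∈ n) r.input ∨ ∀ q ∈ n, q.input ≠ r.input) :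
    Conn (M + nts r.output) (· ∈ n) := by
  have key : ∀ Y, Reach (r.input ::ₘ M) (· ∈ r ::ₘ n) Y →
      Y = r.input ∨ Reach (M + nts r.output) (· ∈ n) Y := by
    intro Y hY
    induction hY with
    | base hY =>
      rcases Multiset.mem_cons.1 hY with hY | hY
      · exact .inl hY
      · exact .inr (.base (by simp [hY]))
    | @step q Y _ hq hY ih =>
      right
      rcases Multiset.mem_cons.1 hq with rfl | hq
      · exact .base (by simp [hY])
      · rcases ih with ih | ih
        · rcases h with h | h
          · exact .step (ih ▸ h) hq hY
          · exact absurd ih (h q hq)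
        · exact .step ih hq hY
  intro q hq
  rcases key _ (hc q (by simp [hq])) with h' | h'
  · rcases h with h | h
    · exact h' ▸ h
    · exact absurd h' (h q hq)
  · exact h'

/-- A balanced and connected nonempty multiset of rules contains a rule that can be fired so that
the remaining rules are again connected to the resulting nonterminals. -/
lemma exists_firing {n : Multiset (ContextFreeRule T N)} {M : Multiset N}
    (hb : M + outs n = inputs n) (hc : Conn M (· ∈ n)) (hn : n ≠ 0) :
    ∃ r n' M', n = r ::ₘ n' ∧ M = r.input ::ₘ M' ∧ Conn (M' + nts r.output) (· ∈ n') := by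
  have hM : ∃ X, X ∈ M := by
    obtain ⟨r, hr⟩ := Multiset.exists_mem_of_ne_zero hn
    have := hc r hr
    generalize r.input = Y at this
    induction this with
    | base h => exact ⟨_, h⟩
    | step _ _ _ ih => exact ih
  obtain ⟨X, hX⟩ := hM
  obtain ⟨M, rfl⟩ := Multiset.exists_cons_of_mem hX
  by_cases hcyc : ∃ r ∈ n, r.input = X ∧ Reach (nts r.output) (· ∈ n) X
  · obtain ⟨r, hr, rfl, hXr⟩ := hcyc
    obtain ⟨n, rfl⟩ := Multiset.exists_cons_of_mem hr
    refine ⟨r, n, M, rfl, rfl, conn_of_cons hc (.inl ?_)⟩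
    -- Cutting a path from the right-hand side of `r` to `X` at its first visit to `X`
    -- leaves a path that does not use `r`.
    have key : ∀ Y, Reach (nts r.output) (· ∈ r ::ₘ n) Y →
        Reach (M + nts r.output) (· ∈ n) Y ∨ Reach (M + nts r.output) (· ∈ n) r.input := by
      intro Y hY
      induction hY with
      | base hY => exact .inl (.base (by simp [hY]))
      | @step q Y _ hq hY ih =>
        rcases ih with ih | ih
        · rcases Multiset.mem_cons.1 hq with rfl | hq
          · exact .inr ih
          · exact .inl (.step ih hq hY)
        · exact .inr ih
    simpa using key _ hXr
  · have hXi : X ∈ inputs n := hb ▸ by simp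
    obtain ⟨r, hr, rfl⟩ := mem_inputs.1 hXi
    obtain ⟨n, rfl⟩ := Multiset.exists_cons_of_mem hr
    refine ⟨r, n, M, rfl, rfl, conn_of_cons hc ?_⟩
    by_cases hX' : r.input ∈ inputs n
    swap
    · exact .inr fun q hq h => hX' (mem_inputs.2 ⟨q, hq, h⟩)
    left
    rw [inputs_cons, Multiset.cons_add, Multiset.cons_inj_right] at hb
    rw [← hb, Multiset.mem_add] at hX'
    rcases hX' with hX' | hX'
    · exact .base (by simp [hX'])
    obtain ⟨p, hp, hXp⟩ := exists_of_mem_outs hX'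
    -- A reachable nonterminal other than `X` is reached through `X` or survives firing `r`.
    have key : ∀ Y, Reach (r.input ::ₘ M) (· ∈ r ::ₘ n) Y →
        Y = r.input ∨ (∃ q ∈ r ::ₘ n, q.input = r.input ∧ Reach (nts q.output) (· ∈ r ::ₘ n) Y) ∨
          Reach (M + nts r.output) (· ∈ n) Y := by
      intro Y hY
      induction hY with
      | base hY =>
        rcases Multiset.mem_cons.1 hY with hY | hY
        · exact .inl hY
        · exact .inr (.inr (.base (by simp [hY])))
      | @step q Y _ hq hY ih =>
        right
        rcases ih with ih | ⟨s, hs, hsX, ih⟩ | ih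
        · exact .inl ⟨q, hq, ih, .base hY⟩
        · exact .inl ⟨s, hs, hsX, .step ih hq hY⟩
        · right
          rcases Multiset.mem_cons.1 hq with rfl | hq
          · exact .base (by simp [hY])
          · exact .step ih hq hY
    rcases key _ (hc p hp) with h | ⟨q, hq, hqX, h⟩ | h
    · exact absurd ⟨p, hp, h, .base hXp⟩ hcyc
    · exact absurd ⟨q, hq, hqX, .step h hp hXp⟩ hcyc
    · rcases Multiset.mem_cons.1 hp with rfl | hp
      · exact h
      · exact .step h hp hXp

/-- Sufficiency of balance and connectivity for realizability. -/
lemma derives_of_rules {g : ContextFreeGrammar T} (n : Multiset (ContextFreeRule T g.NT)) :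
    ∀ u : List (Symbol T g.NT), (∀ r ∈ n, r ∈ g.rules) → nts u + outs n = inputs n →
      Conn (nts u) (· ∈ n) →
      ∃ w : List T, g.Derives u (w.map .terminal) ∧ parikh w = ters u + letters n := by
  induction hk : Multiset.card n generalizing n with
  | zero =>
    intro u _ hb _
    obtain rfl := Multiset.card_eq_zero.1 hk
    obtain ⟨w, rfl⟩ := eq_map_terminal_of_nts (u := u) (by simpa using hb)
    exact ⟨w, .refl _, by simp [ters_map_terminal]⟩
  | succ k ih =>
    intro u hg hb hc
    obtain ⟨r, n, M, rfl, hM, hc'⟩ := exists_firing hb hc (by rintro rfl; simp at hk)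
    obtain ⟨p, q, rfl⟩ := exists_split_of_mem_nts (u := u) (X := r.input) (by simp [hM])
    have hpq : M = nts p + nts q := by
      simp only [nts_append, nts_nonterminal] at hM
      rw [← Multiset.singleton_add, add_right_comm, add_comm] at hM
      exact (add_left_cancel hM).symm
    have hv : nts (p ++ r.output ++ q) = M + nts r.output := by
      simp only [nts_append, hpq]; abel
    obtain ⟨w, hw, hwp⟩ := ih n (by simpa using hk) (p ++ r.output ++ q)
      (fun s hs => hg s (by simp [hs]))
      (by
        rw [hM, inputs_cons, outs_cons, Multiset.cons_add, Multiset.cons_inj_right] at hb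
        rw [hv, ← hb, add_assoc])
      (hv ▸ hc')
    refine ⟨w, ContextFreeGrammar.Produces.trans_derives
      ⟨r, hg r (by simp), r.rewrites_of_exists_parts p q⟩ hw, ?_⟩
    rw [hwp, letters_cons]
    simp only [ters_append, ters_nonterminal]
    abel

/-- Necessity of balance and connectivity for realizability. -/
lemma exists_rules_of_derives {g : ContextFreeGrammar T} {w : List T} {u : List (Symbol T g.NT)}
    (h : g.Derives u (w.map .terminal)) :
    ∃ n : Multiset (ContextFreeRule T g.NT), (∀ r ∈ n, r ∈ g.rules) ∧
      nts u + outs n = inputs n ∧ Conn (nts u) (· ∈ n) ∧ parikh w = ters u + letters n := by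
  induction h using Relation.ReflTransGen.head_induction_on with
  | refl =>
    exact ⟨0, by simp, by simp [nts_map_terminal], fun r hr => by simp at hr,
      by simp [ters_map_terminal]⟩
  | head hp _ ih =>
    obtain ⟨r, hr, hrw⟩ := hp
    obtain ⟨p, q, rfl, rfl⟩ := hrw.exists_parts
    obtain ⟨n, hg, hb, hc, hw⟩ := ih
    refine ⟨r ::ₘ n, ?_, ?_, ?_, ?_⟩
    · simpa [hr] using hg
    · rw [inputs_cons, outs_cons, ← hb, ← Multiset.singleton_add]
      simp only [nts_append, nts_nonterminal]
      abel
    · have hX : Reach (nts (p ++ [.nonterminal r.input] ++ q)) (· ∈ r ::ₘ n) r.input :=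
        .base (by rw [nts_append, nts_append, nts_nonterminal]; simp)
      have key : ∀ Y, Reach (nts (p ++ r.output ++ q)) (· ∈ n) Y →
          Reach (nts (p ++ [.nonterminal r.input] ++ q)) (· ∈ r ::ₘ n) Y := by
        intro Y hY
        induction hY with
        | base hY =>
          simp only [nts_append, Multiset.mem_add] at hY
          rcases hY with (hY | hY) | hY
          · exact .base (by rw [nts_append, nts_append]; simp [hY])
          · exact .step hX (by simp) hY
          · exact .base (by rw [nts_append]; simp [hY])
        | step _ hq hY ih => exact .step ih (by simp [hq]) hY
      intro s hs
      rcases Multiset.mem_cons.1 hs with rfl | hs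
      · exact hX
      · exact key _ (hc s hs)
    · rw [hw, letters_cons]
      simp only [ters_append, ters_nonterminal]
      abel

/-! ### Semilinearity of the Parikh image -/

/-- The multiset of members of `R` with prescribed multiplicities. -/
def ofMult {β : Type} (R : Finset β) : (R → ℕ) →+ Multiset β where
  toFun x := ∑ r, x r • ({r.1} : Multiset β)
  map_zero' := by simp
  map_add' x y := by simp [add_nsmul, Finset.sum_add_distrib]

lemma mem_of_mem_ofMult {β : Type} {R : Finset β} {x : R → ℕ} {b : β} (h : b ∈ ofMult R x) :
    b ∈ R := by
  replace h : b ∈ ∑ r, x r • ({r.1} : Multiset β) := h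
  rw [Multiset.mem_sum] at h
  obtain ⟨r, _, h⟩ := h
  have := Multiset.mem_of_mem_nsmul h
  rw [Multiset.mem_singleton] at this
  exact this ▸ r.2

lemma exists_ofMult {β : Type} {R : Finset β} (m : Multiset β) (h : ∀ b ∈ m, b ∈ R) :
    ∃ x, m = ofMult R x := by
  classical
  induction m using Multiset.induction_on with
  | empty => exact ⟨0, by simp⟩
  | cons b m ih =>
    obtain ⟨x, hx⟩ := ih fun c hc => h c (by simp [hc])
    have hb : b ∈ R := h b (Multiset.mem_cons_self b m)
    refine ⟨Pi.single ⟨b, hb⟩ 1 + x, ?_⟩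
    rw [map_add, ← hx, ← Multiset.singleton_add]
    congr 1
    change {b} = ∑ r : R, (Pi.single ⟨b, hb⟩ 1 : R → ℕ) r • ({r.1} : Multiset β)
    rw [Finset.sum_eq_single ⟨b, hb⟩ (by simp +contextual) (by simp)]
    simp

lemma isSemilinearSet_parikhImage (g : ContextFreeGrammar T) :
    IsSemilinearSet (parikhImage g.language) := by
  classical
  let S : Finset (ContextFreeRule T g.NT) → Set (Multiset T) := fun R =>
    (letters R.val) +ᵥ ((letters.comp (ofMult R)) ''
      {x | (({g.initial} : Multiset g.NT) + outs R.val) + (outs.comp (ofMult R)) x =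
        inputs R.val + (inputs.comp (ofMult R)) x})
  have hS : ∀ R, IsSemilinearSet (S R) := fun R =>
    ((isSemilinearSet_setOfPred_eq _ _ _ _).image _).vadd _
  have : parikhImage g.language =
      ⋃ R ∈ g.rules.powerset.filter (fun R => Conn {g.initial} (· ∈ R)), S R := by
    ext m
    simp only [Set.mem_iUnion, Finset.mem_filter, Finset.mem_powerset, exists_prop]
    constructor
    · rintro ⟨w, hw, rfl⟩
      obtain ⟨n, hg, hb, hc, hm⟩ := exists_rules_of_derives hw
      rw [nts_nonterminal] at hb hc
      rw [ters_nonterminal, zero_add] at hm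
      obtain ⟨m', hm'⟩ := Multiset.le_iff_exists_add.1 (Multiset.dedup_le n)
      obtain ⟨x, rfl⟩ := exists_ofMult (R := n.toFinset) m' fun b hb => by
        rw [Multiset.mem_toFinset, hm']; simp [hb]
      have hn : n = n.toFinset.val + ofMult n.toFinset x := hm'
      refine ⟨n.toFinset, ⟨fun r hr => hg r (by simpa using hr), by simpa using hc⟩,
        Set.mem_vadd_set.2 ⟨_, ⟨x, ?_, rfl⟩, ?_⟩⟩
      · rw [hn, map_add, map_add, ← add_assoc] at hb
        exact hb
      · rw [hm, vadd_eq_add, AddMonoidHom.comp_apply, ← map_add, ← hn]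
    · rintro ⟨R, ⟨hR, hc⟩, hm⟩
      obtain ⟨_, ⟨x, hx, rfl⟩, rfl⟩ := Set.mem_vadd_set.1 hm
      have hmem : ∀ r, r ∈ R.val + ofMult R x ↔ r ∈ R := fun r => by
        rw [Multiset.mem_add]
        exact ⟨fun h => h.elim id mem_of_mem_ofMult, .inl⟩
      obtain ⟨w, hw, hwp⟩ := derives_of_rules (R.val + ofMult R x) [.nonterminal g.initial]
        (fun r hr => hR ((hmem r).1 hr))
        (by
          rw [map_add, map_add, ← add_assoc, nts_nonterminal]
          exact hx)
        (by simpa only [hmem, nts_nonterminal] using hc)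
      refine ⟨w, hw, ?_⟩
      rw [hwp, ters_nonterminal, zero_add, map_add]
      rfl
  rw [this]
  exact .biUnion_finset fun R _ => hS R

/-! ### Regular languages for semilinear sets -/

/-- `S · W*` for sets of words `S` and `W`. -/
def tailStar (W S : Set (List T)) : Language T :=
  {w | ∃ s ∈ S, ∃ l : List (List T), (∀ y ∈ l, y ∈ W) ∧ w = s ++ l.flatten}

/-- One-letter quotients of `S · W*` have the form `S' · W*`, where `S'` consists of suffixes of
words in `S ∪ W`. -/
lemma leftQuotient_tailStar (W S F : Set (List T)) (hF : ∀ b s, b :: s ∈ F → s ∈ F)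
    (hW : W ⊆ F) (hS : S ⊆ F) (x : List T) :
    ∃ S' ⊆ F, (tailStar W S).leftQuotient x = tailStar W S' := by
  induction x using List.reverseRecOn with
  | nil => exact ⟨S, hS, rfl⟩
  | append_singleton x b ih =>
    obtain ⟨S', hS', h⟩ := ih
    refine ⟨{t | b :: t ∈ S' ∨ [] ∈ S' ∧ b :: t ∈ W}, ?_, ?_⟩
    · rintro t (ht | ⟨_, ht⟩)
      · exact hF _ _ (hS' ht)
      · exact hF _ _ (hW ht)
    · rw [Language.leftQuotient_append, h]
      ext y
      rw [Language.mem_leftQuotient]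
      constructor
      · rintro ⟨s, hs, l, hl, he⟩
        cases s with
        | cons c s =>
          simp only [List.cons_append, List.nil_append, List.cons.injEq] at he
          obtain ⟨rfl, rfl⟩ := he
          exact ⟨s, .inl hs, l, hl, rfl⟩
        | nil =>
          -- The letter `b` is read from the first nonempty block.
          induction l with
          | nil => simp at he
          | cons z l ihl =>
            cases z with
            | nil => exact ihl (fun y hy => hl y (by simp [hy])) (by simpa using he)
            | cons c z =>
              simp only [List.cons_append, List.nil_append, List.flatten_cons,
                List.cons.injEq] at he
              obtain ⟨rfl, rfl⟩ := he
              exact ⟨z, .inr ⟨hs, hl _ (by simp)⟩, l, fun y hy => hl y (by simp [hy]), rfl⟩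
      · rintro ⟨t, ht | ⟨hn, ht⟩, l, hl, rfl⟩
        · exact ⟨b :: t, ht, l, hl, by simp⟩
        · exact ⟨[], hn, (b :: t) :: l, by simpa [ht] using hl, by simp⟩

lemma isRegular_tailStar {W S : Set (List T)} (hW : W.Finite) (hS : S.Finite) :
    (tailStar W S).IsRegular := by
  apply Language.IsRegular.of_finite_range_leftQuotient
  let F : Set (List T) := ⋃ w ∈ W ∪ S, {s | s <:+ w}
  have hFf : F.Finite := (hW.union hS).biUnion fun w _ => by
    have : {s | s <:+ w} = {s | s ∈ w.tails} := by ext; simp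
    rw [this]
    exact w.tails.finite_toSet
  have hsub : ∀ w ∈ W ∪ S, w ∈ F := fun w hw => Set.mem_biUnion hw (List.suffix_refl w)
  have hF : ∀ b s, b :: s ∈ F → s ∈ F := by
    intro b s h
    simp only [F, Set.mem_iUnion, exists_prop] at h ⊢
    obtain ⟨w, hw, h⟩ := h
    exact ⟨w, hw, (List.suffix_cons b s).trans h⟩
  refine (hFf.finite_subsets.image (tailStar W)).subset ?_
  rintro _ ⟨x, rfl⟩
  obtain ⟨S', hS', h⟩ := leftQuotient_tailStar W S F hF (fun w hw => hsub w (.inl hw))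
    (fun w hw => hsub w (.inr hw)) x
  exact ⟨S', hS', h.symm⟩

lemma parikh_append (u v : List T) : parikh (u ++ v) = parikh u + parikh v := by
  simp [parikh]

lemma parikh_toList (m : Multiset T) : parikh m.toList = m := by
  simp [parikh]

lemma parikh_flatten (l : List (List T)) : parikh l.flatten = (l.map parikh).sum := by
  induction l with
  | nil => rfl
  | cons w l ih => simp [parikh_append, ih]

lemma exists_regular_of_isLinearSet {A : Set (Multiset T)} (h : IsLinearSet A) :
    ∃ L : Language T, L.IsRegular ∧ parikhImage L = A := by
  obtain ⟨a, t, ht, rfl⟩ := h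
  refine ⟨tailStar (Multiset.toList '' t) {a.toList},
    isRegular_tailStar (ht.image _) (Set.finite_singleton _), ?_⟩
  ext m
  rw [Set.mem_vadd_set]
  constructor
  · rintro ⟨_, ⟨_, rfl, l, hl, rfl⟩, rfl⟩
    refine ⟨parikh l.flatten, ?_, by rw [parikh_append, parikh_toList]; rfl⟩
    rw [parikh_flatten]
    refine AddSubmonoid.list_sum_mem _ fun x hx => ?_
    obtain ⟨y, hy, rfl⟩ := List.mem_map.1 hx
    obtain ⟨z, hz, rfl⟩ := hl y hy
    rw [parikh_toList]
    exact AddSubmonoid.subset_closure hz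
  · rintro ⟨x, hx, rfl⟩
    obtain ⟨l, hl, rfl⟩ := AddSubmonoid.exists_list_of_mem_closure hx
    refine ⟨a.toList ++ (l.map Multiset.toList).flatten, ⟨_, rfl, _, ?_, rfl⟩, ?_⟩
    · intro y hy
      obtain ⟨z, hz, rfl⟩ := List.mem_map.1 hy
      exact ⟨z, hl z hz, rfl⟩
    · rw [parikh_append, parikh_toList, parikh_flatten, List.map_map]
      have : (parikh ∘ Multiset.toList : Multiset T → Multiset T) = id := funext parikh_toList
      rw [this, List.map_id, vadd_eq_add]

lemma exists_regular_of_isSemilinearSet {A : Set (Multiset T)} (h : IsSemilinearSet A) :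
    ∃ L : Language T, L.IsRegular ∧ parikhImage L = A := by
  obtain ⟨S, hS, hlin, rfl⟩ := h
  induction S, hS using Set.Finite.induction_on with
  | empty =>
    refine ⟨tailStar ∅ ∅, isRegular_tailStar Set.finite_empty Set.finite_empty, ?_⟩
    ext m
    simp [parikhImage, tailStar]
  | @insert B S _ _ ih =>
    obtain ⟨L₁, hL₁, h₁⟩ := exists_regular_of_isLinearSet (hlin B (by simp))
    obtain ⟨L₂, hL₂, h₂⟩ := ih fun C hC => hlin C (by simp [hC])
    refine ⟨L₁ + L₂, hL₁.add hL₂, ?_⟩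
    rw [Set.sUnion_insert, ← h₁, ← h₂]
    exact Set.image_union parikh L₁ L₂

end ParikhProof

/-- Parikh's Lemma: for every context-free language `L` there is a regular language `L'`
with the same Parikh image. -/
theorem parikh_lemma {α : Type} [Fintype α] {L : Language α}
    (hL : L.IsContextFree) :
    ∃ L' : Language α, L'.IsRegular ∧ parikhImage L = parikhImage L' := by
  obtain ⟨g, rfl⟩ := hL
  obtain ⟨L', hL', h⟩ := ParikhProof.exists_regular_of_isSemilinearSet
    (ParikhProof.isSemilinearSet_parikhImage g)
  exact ⟨L', hL', h.symm⟩
end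

section
/- Let G = (X, Γ, P) be a CFG in normal form, R = (D, Γ, δ) a regular grammar, and G^r the product grammar. Then for every w ∈ Γ*, d, d' ∈ D, and A ∈ X: [dAd'] ⇒*_{G^r} w if and only if d ⇒*_R w·d' and A ⇒*_G w. -/
/-!
Terminal words derived in a context-free grammar are governed by pre-fixed points: assign to each
variable `A` a language `I A`, and to a sentential form the product of the languages of its symbols.
If the value of every right-hand side is contained in the value of its left-hand side, then every
terminal word derived from a form lies in the value of that form (`CFG'.Derives.mem_interp`), because
a derivation step can only shrink the value.

Derivations `d ⇒* w·d'` in a regular grammar are exactly runs of the automaton with transitions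
`d → a·d'` (`CFG'.derives_iff_run`), and runs can be concatenated and split. Both directions of the
theorem are then instances of the pre-fixed-point principle. For the product grammar, take
`I (d, A, d') = {w | w labels a run from d to d' and A ⇒* w}`. For `G`, take
`I A = {w | (d, A, d') ⇒* w in the product for all d, d' joined by a run labelled w}`; normal form
makes this a pre-fixed point, a binary production being handled by splitting the run at the
boundary between the two factors.
-/

/-- A context-free grammar given by a set of productions. -/
structure CFG' (T N : Type) where
  P : Set (N × List (Symbol T N))

namespace CFG'

variable {T N : Type}

/-- One-step derivation relation of a grammar. -/
inductive Step (G : CFG' T N) : List (Symbol T N) → List (Symbol T N) → Prop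
  | step {A : N} {w : List (Symbol T N)} (y z : List (Symbol T N)) :
      (A, w) ∈ G.P → Step G (y ++ [Symbol.nonterminal A] ++ z) (y ++ w ++ z)

/-- Reflexive-transitive closure of the one-step derivation relation. -/
def Derives (G : CFG' T N) : List (Symbol T N) → List (Symbol T N) → Prop :=
  Relation.ReflTransGen G.Step

/-- Every production lies in `X × (XX ∪ Γ ∪ {ε})`. -/
def NormalForm (G : CFG' T N) : Prop :=
  ∀ p ∈ G.P,
    (∃ B C : N, p.2 = [Symbol.nonterminal B, Symbol.nonterminal C]) ∨
    (∃ a : T, p.2 = [Symbol.terminal a]) ∨ p.2 = []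

/-- Every production lies in `X × ((Γ·X) ∪ {ε})`. -/
def RegularForm (G : CFG' T N) : Prop :=
  ∀ p ∈ G.P,
    (∃ (a : T) (B : N), p.2 = [Symbol.terminal a, Symbol.nonterminal B]) ∨ p.2 = []

end CFG'
/-- The product grammar `G^r` of a normal-form CFG `G` and a regular grammar `R`. -/
def productGrammar {T N D : Type} (G : CFG' T N) (R : CFG' T D) : CFG' T (D × N × D) where
  P := { p |
    (∃ (A : N) (d : D),
      (A, ([] : List (Symbol T N))) ∈ G.P ∧ p = ((d, A, d), [])) ∨
    (∃ (A : N) (a : T) (d d' : D),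
      (A, [Symbol.terminal a]) ∈ G.P ∧
      (d, [Symbol.terminal a, Symbol.nonterminal d']) ∈ R.P ∧
      p = ((d, A, d'), [Symbol.terminal a])) ∨
    (∃ (A B C : N) (d0 d1 d2 : D),
      (A, [Symbol.nonterminal B, Symbol.nonterminal C]) ∈ G.P ∧
      p = ((d0, A, d2),
        [Symbol.nonterminal (d0, B, d1), Symbol.nonterminal (d1, C, d2)])) }

namespace CFG'

variable {T N D : Type}

theorem derives_of_mem {G : CFG' T N} {A : N} {w : List (Symbol T N)} (h : (A, w) ∈ G.P) :
    G.Derives [Symbol.nonterminal A] w := by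
  have hstep : G.Step [Symbol.nonterminal A] w := by simpa using Step.step [] [] h
  exact Relation.ReflTransGen.single hstep

theorem Step.congr_append {G : CFG' T N} {u v : List (Symbol T N)} (h : G.Step u v)
    (p q : List (Symbol T N)) : G.Step (p ++ u ++ q) (p ++ v ++ q) := by
  obtain ⟨y, z, h⟩ := h
  simpa using Step.step (p ++ y) (z ++ q) h

theorem Derives.congr_append {G : CFG' T N} {u v : List (Symbol T N)} (h : G.Derives u v)
    (p q : List (Symbol T N)) : G.Derives (p ++ u ++ q) (p ++ v ++ q) := by
  induction h with
  | refl => exact Relation.ReflTransGen.refl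
  | tail _ hstep ih => exact Relation.ReflTransGen.tail ih (hstep.congr_append p q)

theorem Derives.append {G : CFG' T N} {u v u' v' : List (Symbol T N)} (h : G.Derives u v)
    (h' : G.Derives u' v') : G.Derives (u ++ u') (v ++ v') := by
  have h₁ : G.Derives (u ++ u') (v ++ u') := by simpa using h.congr_append [] u'
  have h₂ : G.Derives (v ++ u') (v ++ v') := by simpa using h'.congr_append v []
  exact Relation.ReflTransGen.trans h₁ h₂

/-- A binary production followed by derivations of terminal words from the two variables. -/
theorem derives_of_binary {G : CFG' T N} {A B C : N}
    (h : (A, [Symbol.nonterminal B, Symbol.nonterminal C]) ∈ G.P) {u v : List T}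
    (hu : G.Derives [Symbol.nonterminal B] (u.map Symbol.terminal))
    (hv : G.Derives [Symbol.nonterminal C] (v.map Symbol.terminal)) :
    G.Derives [Symbol.nonterminal A] ((u ++ v).map Symbol.terminal) := by
  rw [List.map_append]
  exact Relation.ReflTransGen.trans (derives_of_mem h) (hu.append hv)

/-- The language of a symbol when each variable `A` is interpreted as the language `I A`. -/
def symbolInterp (I : N → Language T) : Symbol T N → Language T
  | Symbol.terminal a => {[a]}
  | Symbol.nonterminal A => I A

/-- The language of a sentential form: the product of the languages of its symbols. -/
def interp (I : N → Language T) (s : List (Symbol T N)) : Language T :=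
  (s.map (symbolInterp I)).prod

theorem mem_interp_map_terminal (I : N → Language T) (w : List T) :
    w ∈ interp I (w.map Symbol.terminal) := by
  induction w with
  | nil => exact Language.nil_mem_one
  | cons a w ih =>
    simp only [interp, List.map_cons, List.prod_cons] at ih ⊢
    exact Language.mem_mul.2 ⟨[a], rfl, w, ih, rfl⟩

/-- A pre-fixed point of the productions contains every terminal word that is derived. -/
theorem Derives.mem_interp {G : CFG' T N} {I : N → Language T}
    (hI : ∀ A r, (A, r) ∈ G.P → ∀ w ∈ interp I r, w ∈ I A)
    {s : List (Symbol T N)} {w : List T} (h : G.Derives s (w.map Symbol.terminal)) :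
    w ∈ interp I s := by
  induction h using Relation.ReflTransGen.head_induction_on with
  | refl => exact mem_interp_map_terminal I w
  | head hstep _ ih =>
    obtain ⟨y, z, hp⟩ := hstep
    simp only [interp, List.map_append, List.prod_append, List.map_cons, List.map_nil,
      List.prod_singleton] at ih ⊢
    obtain ⟨_, ⟨a, ha, b, hb, rfl⟩, c, hc, rfl⟩ := ih
    exact ⟨_, ⟨a, ha, b, hI _ _ hp b hb, rfl⟩, c, hc, rfl⟩

/-- `R.Run d w d'`: the word `w` labels a path from `d` to `d'` in the automaton whose transitions
are the productions `d → a·d'` of `R`. -/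
inductive Run (R : CFG' T D) : D → List T → D → Prop
  | nil (d : D) : Run R d [] d
  | cons {d d₁ d' : D} {a : T} {w : List T} :
      (d, [Symbol.terminal a, Symbol.nonterminal d₁]) ∈ R.P → Run R d₁ w d' → Run R d (a :: w) d'

theorem run_append {R : CFG' T D} {d d' : D} {u v : List T} :
    R.Run d (u ++ v) d' ↔ ∃ d₁, R.Run d u d₁ ∧ R.Run d₁ v d' := by
  induction u generalizing d with
  | nil =>
    refine ⟨fun h => ⟨d, .nil d, h⟩, ?_⟩
    rintro ⟨_, ⟨⟩, h⟩
    exact h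
  | cons a u ih =>
    constructor
    · rintro (_ | ⟨hp, h⟩)
      obtain ⟨d₁, h₁, h₂⟩ := ih.1 h
      exact ⟨d₁, .cons hp h₁, h₂⟩
    · rintro ⟨d₁, _ | ⟨hp, h₁⟩, h₂⟩
      exact .cons hp (ih.2 ⟨d₁, h₁, h₂⟩)

theorem Run.derives {R : CFG' T D} {d d' : D} {w : List T} (h : R.Run d w d') :
    R.Derives [Symbol.nonterminal d] (w.map Symbol.terminal ++ [Symbol.nonterminal d']) := by
  induction h with
  | nil d => exact Relation.ReflTransGen.refl
  | @cons d d₁ d' a w hp _ ih =>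
    refine Relation.ReflTransGen.trans (derives_of_mem hp) ?_
    simpa [Derives] using ih.congr_append [Symbol.terminal a] []

/-- A sentential form with its only variable at the right end decomposes in only one way around a
variable. -/
theorem eq_of_append_nonterminal {w : List T} {d A : D} {y z : List (Symbol T D)}
    (h : y ++ [Symbol.nonterminal A] ++ z = w.map Symbol.terminal ++ [Symbol.nonterminal d]) :
    y = w.map Symbol.terminal ∧ A = d ∧ z = [] := by
  induction w generalizing y with
  | nil => cases y <;> simp_all
  | cons a w ih =>
    cases y with
    | nil => simp at h
    | cons x y =>
      simp only [List.cons_append, List.map_cons, List.cons.injEq] at h ⊢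
      obtain ⟨h₁, h₂, h₃⟩ := ih h.2
      exact ⟨⟨h.1, h₁⟩, h₂, h₃⟩

/-- Every form derived from a variable of a regular grammar is `w·d'` for a run labelled `w`, or
has lost its variable for good. -/
theorem Derives.run_or_terminal {R : CFG' T D} (hR : R.RegularForm) {d : D}
    {s : List (Symbol T D)} (h : R.Derives [Symbol.nonterminal d] s) :
    (∃ w d', s = w.map Symbol.terminal ++ [Symbol.nonterminal d'] ∧ R.Run d w d') ∨
      ∃ w : List T, s = w.map Symbol.terminal := by
  induction h with
  | refl => exact .inl ⟨[], d, rfl, .nil d⟩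
  | tail _ hstep ih =>
    obtain @⟨B, _, y, z, hp⟩ := hstep
    rcases ih with ⟨w, d', hs, hrun⟩ | ⟨w, hs⟩
    · obtain ⟨rfl, rfl, rfl⟩ := eq_of_append_nonterminal hs
      rcases hR _ hp with ⟨a, C, hr⟩ | hr
      · dsimp only at hr
        subst hr
        exact .inl ⟨w ++ [a], C, by simp, run_append.2 ⟨_, hrun, .cons hp (.nil C)⟩⟩
      · dsimp only at hr
        subst hr
        exact .inr ⟨w, by simp⟩
    · have hmem := congrArg (Symbol.nonterminal B ∈ ·) hs
      simp at hmem

theorem derives_iff_run {R : CFG' T D} (hR : R.RegularForm) {d d' : D} {w : List T} :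
    R.Derives [Symbol.nonterminal d] (w.map Symbol.terminal ++ [Symbol.nonterminal d']) ↔
      R.Run d w d' := by
  refine ⟨fun h => ?_, Run.derives⟩
  rcases h.run_or_terminal hR with ⟨v, e, hs, hrun⟩ | ⟨v, hs⟩
  · obtain ⟨h₁, rfl, -⟩ := eq_of_append_nonterminal (z := []) (by simpa using hs)
    rwa [List.map_injective_iff.2 (fun _ _ h => Symbol.terminal.inj h) h₁]
  · have hmem := congrArg (Symbol.nonterminal d' ∈ ·) hs
    simp at hmem

end CFG'

open CFG' in
theorem productGrammar_sound {T N D : Type} {G : CFG' T N} {R : CFG' T D} {w : List T}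
    {d d' : D} {A : N}
    (h : (productGrammar G R).Derives [Symbol.nonterminal (d, A, d')] (w.map Symbol.terminal)) :
    R.Run d w d' ∧ G.Derives [Symbol.nonterminal A] (w.map Symbol.terminal) := by
  let I : D × N × D → Language T := fun x =>
    {w | R.Run x.1 w x.2.2 ∧ G.Derives [Symbol.nonterminal x.2.1] (w.map Symbol.terminal)}
  have key := h.mem_interp (I := I) ?_
  · simp only [interp, List.map_cons, List.map_nil, List.prod_singleton] at key
    exact key
  rintro X r hp w hw
  rcases hp with ⟨A, d, hA, hp⟩ | ⟨A, a, d, d', hA, hd, hp⟩ | ⟨A, B, C, d₀, d₁, d₂, hA, hp⟩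
  · obtain ⟨rfl, rfl⟩ := Prod.mk.inj hp
    obtain rfl : w = [] := hw
    exact ⟨.nil d, derives_of_mem hA⟩
  · obtain ⟨rfl, rfl⟩ := Prod.mk.inj hp
    simp only [interp, List.map_cons, List.map_nil, List.prod_singleton] at hw
    obtain rfl : w = [a] := hw
    exact ⟨.cons hd (.nil d'), derives_of_mem hA⟩
  · obtain ⟨rfl, rfl⟩ := Prod.mk.inj hp
    simp only [interp, List.map_cons, List.map_nil, List.prod_cons, List.prod_nil, mul_one] at hw
    obtain ⟨u, ⟨hu, hu'⟩, v, ⟨hv, hv'⟩, rfl⟩ := hw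
    exact ⟨run_append.2 ⟨d₁, hu, hv⟩, derives_of_binary hA hu' hv'⟩

open CFG' in
theorem productGrammar_complete {T N D : Type} {G : CFG' T N} (hG : G.NormalForm) {R : CFG' T D}
    {w : List T} {d d' : D} {A : N} (hrun : R.Run d w d')
    (h : G.Derives [Symbol.nonterminal A] (w.map Symbol.terminal)) :
    (productGrammar G R).Derives [Symbol.nonterminal (d, A, d')] (w.map Symbol.terminal) := by
  let I : N → Language T := fun A => {w | ∀ d d', R.Run d w d' →
    (productGrammar G R).Derives [Symbol.nonterminal (d, A, d')] (w.map Symbol.terminal)}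
  have key := h.mem_interp (I := I) ?_
  · simp only [interp, List.map_cons, List.map_nil, List.prod_singleton] at key
    exact key d d' hrun
  rintro A r hp w hw d d' hrun
  rcases hG _ hp with ⟨B, C, hr⟩ | ⟨a, hr⟩ | hr <;> dsimp only at hr <;> subst hr
  · simp only [interp, List.map_cons, List.map_nil, List.prod_cons, List.prod_nil, mul_one] at hw
    obtain ⟨u, hu, v, hv, rfl⟩ := hw
    obtain ⟨d₁, h₁, h₂⟩ := run_append.1 hrun
    have hmem : ((d, A, d'), [Symbol.nonterminal (d, B, d₁), Symbol.nonterminal (d₁, C, d')]) ∈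
        (productGrammar G R).P := .inr (.inr ⟨A, B, C, d, d₁, d', hp, rfl⟩)
    exact derives_of_binary hmem (hu _ _ h₁) (hv _ _ h₂)
  · simp only [interp, List.map_cons, List.map_nil, List.prod_singleton] at hw
    obtain rfl : w = [a] := hw
    rcases hrun with _ | ⟨hd, ⟨⟩⟩
    exact derives_of_mem (.inr (.inl ⟨A, a, d, d', hp, hd, rfl⟩))
  · obtain rfl : w = [] := hw
    cases hrun
    exact derives_of_mem (.inl ⟨A, d, hp, rfl⟩)

theorem productGrammar_derives_iff {T N D : Type} [Fintype T] [Fintype N] [Fintype D]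
    (G : CFG' T N) (hG : G.NormalForm) (hGfin : G.P.Finite)
    (R : CFG' T D) (hR : R.RegularForm) (hRfin : R.P.Finite)
    (w : List T) (d d' : D) (A : N) :
    (productGrammar G R).Derives
        [Symbol.nonterminal (d, A, d')] (w.map Symbol.terminal) ↔
      R.Derives [Symbol.nonterminal d]
          (w.map Symbol.terminal ++ [Symbol.nonterminal d']) ∧
      G.Derives [Symbol.nonterminal A] (w.map Symbol.terminal) := by
  rw [CFG'.derives_iff_run hR]
  exact ⟨productGrammar_sound, fun h => productGrammar_complete hG h.1 h.2⟩
end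

section
/- Let G = (X, Γ, P) be a CFG in normal form, R = (D, Γ, δ) a regular grammar, and G^r the product grammar. Then for every σ ∈ Γ ∪ {ε}, d, d' ∈ D, and A ∈ X: if d ⇒*_R σ·d' and A ⇒*_G σ, then [dAd'] ⇒*_{G^r} σ. -/
/-- `Annot R d u d' v`: the sentential form `v` over triples is obtained from `u` by choosing a
state at every gap of `u`, with `d` at the left end and `d'` at the right end, so that a letter
`a` between states `e` and `f` comes with a production `e → a f` of `R`, while a variable `A`
between `e` and `f` becomes the triple `(e, A, f)`. When `u` is a terminal word this is a run
of `R` along `u`. -/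
inductive Annot {T N D : Type} (R : CFG' T D) :
    D → List (Symbol T N) → D → List (Symbol T (D × N × D)) → Prop
  | nil (d : D) : Annot R d [] d []
  | terminal {d e f : D} {a : T} {u : List (Symbol T N)} {v : List (Symbol T (D × N × D))} :
      (d, [Symbol.terminal a, Symbol.nonterminal e]) ∈ R.P → Annot R e u f v →
      Annot R d (Symbol.terminal a :: u) f (Symbol.terminal a :: v)
  | nonterminal {d e f : D} {A : N} {u : List (Symbol T N)}
      {v : List (Symbol T (D × N × D))} : Annot R e u f v →
      Annot R d (Symbol.nonterminal A :: u) f (Symbol.nonterminal (d, A, e) :: v)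

namespace Annot

variable {T N D : Type} {R : CFG' T D}

theorem append {d e f : D} {u u' : List (Symbol T N)} {v v' : List (Symbol T (D × N × D))}
    (h : Annot R d u e v) (h' : Annot R e u' f v') : Annot R d (u ++ u') f (v ++ v') := by
  induction h with
  | nil d => exact h'
  | terminal hp _ ih => exact .terminal hp (ih h')
  | nonterminal _ ih => exact .nonterminal (ih h')

theorem split {u u' : List (Symbol T N)} {d f : D} {v : List (Symbol T (D × N × D))}
    (h : Annot R d (u ++ u') f v) :
    ∃ e v₁ v₂, v = v₁ ++ v₂ ∧ Annot R d u e v₁ ∧ Annot R e u' f v₂ := by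
  induction u generalizing d v with
  | nil => exact ⟨d, [], v, rfl, .nil d, h⟩
  | cons s u ih =>
    cases h with
    | terminal hp h =>
      obtain ⟨e, v₁, v₂, rfl, h₁, h₂⟩ := ih h
      exact ⟨e, _, v₂, rfl, .terminal hp h₁, h₂⟩
    | nonterminal h =>
      obtain ⟨e, v₁, v₂, rfl, h₁, h₂⟩ := ih h
      exact ⟨e, _, v₂, rfl, .nonterminal h₁, h₂⟩

/-- The annotated right-hand side of a normal-form production is a right-hand side of the
product grammar for the triple with the same end states. -/
theorem production {G : CFG' T N} (hG : G.NormalForm) {A : N} {w : List (Symbol T N)}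
    (hA : (A, w) ∈ G.P) {d e : D} {v : List (Symbol T (D × N × D))} (h : Annot R d w e v) :
    ((d, A, e), v) ∈ (productGrammar G R).P := by
  rcases hG _ hA with ⟨B, C, hw⟩ | ⟨a, hw⟩ | hw <;> dsimp only at hw <;> subst hw
  · rcases h with _ | _ | h
    rcases h with _ | _ | h
    cases h
    exact .inr (.inr ⟨A, B, C, _, _, _, hA, rfl⟩)
  · rcases h with _ | ⟨hp, h⟩ | _
    cases h
    exact .inr (.inl ⟨A, a, _, _, hA, hp, rfl⟩)
  · cases h
    exact .inl ⟨A, _, hA, rfl⟩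

/-- Annotations propagate backwards along a derivation of `G`, and the derivation lifts to the
product grammar. -/
theorem of_derives {G : CFG' T N} (hG : G.NormalForm) {u w : List (Symbol T N)}
    (h : G.Derives u w) {d d' : D} {v : List (Symbol T (D × N × D))} (hw : Annot R d w d' v) :
    ∃ v', Annot R d u d' v' ∧ (productGrammar G R).Derives v' v := by
  induction h using Relation.ReflTransGen.head_induction_on with
  | refl => exact ⟨v, hw, .refl⟩
  | head hs _ ih =>
    obtain ⟨v', hv', hd⟩ := ih
    cases hs with
    | step y z hA =>
      obtain ⟨f, v₁₂, v₃, rfl, h₁₂, h₃⟩ := hv'.split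
      obtain ⟨e, v₁, v₂, rfl, h₁, h₂⟩ := h₁₂.split
      exact ⟨_, (h₁.append (.nonterminal (.nil f))).append h₃,
        .head (.step v₁ v₃ (production hG hA h₂)) hd⟩

end Annot

/-- A sentential form of a regular grammar derived from `d` is either a terminal word, or a
terminal word followed by one variable `e`, in which case the word labels a run from `d` to
`e`. -/
theorem regular_derives_cases {T D : Type} (N : Type) {R : CFG' T D} (hR : R.RegularForm)
    {d : D} {u : List (Symbol T D)} (h : R.Derives [Symbol.nonterminal d] u) :
    (∃ (w : List T) (e : D), u = w.map Symbol.terminal ++ [Symbol.nonterminal e] ∧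
      Annot (N := N) R d (w.map Symbol.terminal) e (w.map Symbol.terminal)) ∨
    ∃ w : List T, u = w.map Symbol.terminal := by
  induction h with
  | refl => exact .inl ⟨[], d, rfl, .nil d⟩
  | tail _ hs ih =>
    cases hs with
    | @step B r y z hB =>
      rcases ih with ⟨w, e, hu, hw⟩ | ⟨w, hu⟩
      · rcases List.eq_nil_or_concat z with rfl | ⟨z, s, rfl⟩
        · obtain ⟨rfl, hBe⟩ := List.append_inj' ((List.append_nil _).symm.trans hu) rfl
          obtain rfl : B = e := by simpa using hBe
          rcases hR _ hB with ⟨a, C, hr⟩ | hr <;> dsimp only at hr <;> subst hr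
          · refine .inl ⟨w ++ [a], C, by simp, ?_⟩
            simpa using hw.append (.terminal hB (.nil C))
          · exact .inr ⟨w, by simp⟩
        · -- A symbol to the right of `B` would put `B` inside the terminal word.
          rw [List.concat_eq_append, ← List.append_assoc] at hu
          have hu' := (List.append_inj' hu rfl).1
          have : Symbol.nonterminal B ∈ w.map (Symbol.terminal (N := D)) := by
            rw [← hu']; simp
          simp at this
      · have : Symbol.nonterminal B ∈ w.map (Symbol.terminal (N := D)) := by
          rw [← hu]; simp
        simp at this

theorem annot_of_regular_derives {T D : Type} (N : Type) {R : CFG' T D} (hR : R.RegularForm)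
    {d d' : D} {w : List T} (h : R.Derives [Symbol.nonterminal d]
      (w.map Symbol.terminal ++ [Symbol.nonterminal d'])) :
    Annot (N := N) R d (w.map Symbol.terminal) d' (w.map Symbol.terminal) := by
  rcases regular_derives_cases N hR h with ⟨w', e, hu, hw⟩ | ⟨w', hu⟩
  · obtain ⟨h₁, h₂⟩ := List.append_inj' hu rfl
    obtain rfl : d' = e := by simpa using h₂
    obtain rfl : w = w' := List.map_injective_iff.2 (fun a b hab => by simpa using hab) h₁
    exact hw
  · have : Symbol.nonterminal d' ∈ w'.map (Symbol.terminal (N := D)) := by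
      rw [← hu]; simp
    simp at this

/-- If `d ⇒*_R σ·d'` and `A ⇒*_G σ` for `σ ∈ Γ ∪ {ε}` (a word of length at most one),
then `[dAd'] ⇒*_{G^r} σ`. -/
theorem productGrammar_derives_of_short {T N D : Type} [Fintype T] [Fintype N] [Fintype D]
    (G : CFG' T N) (hG : G.NormalForm) (hGfin : G.P.Finite)
    (R : CFG' T D) (hR : R.RegularForm) (hRfin : R.P.Finite)
    (w : List T) (hw : w.length ≤ 1) (d d' : D) (A : N)
    (h1 : R.Derives [Symbol.nonterminal d]
        (w.map Symbol.terminal ++ [Symbol.nonterminal d']))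
    (h2 : G.Derives [Symbol.nonterminal A] (w.map Symbol.terminal)) :
    (productGrammar G R).Derives
      [Symbol.nonterminal (d, A, d')] (w.map Symbol.terminal) := by
  obtain ⟨v, hv, hd⟩ := Annot.of_derives hG h2 (annot_of_regular_derives N hR h1)
  -- The only annotation of the single variable `A` between `d` and `d'` is the triple itself.
  rcases hv with _ | _ | hv
  cases hv
  exact hd
end

section
/- Let G = (X, Γ, P) be a CFG in normal form, R = (D, Γ, δ) a regular grammar, and G^r the product grammar. If X0 ⇒*_G X (the length-one sentential form consisting of the variable X), X ⇒*_G w for a terminal word w ∈ Γ*, and [dXd'] ⇒*_{G^r} w, then [dX0d'] ⇒*_{G^r} w. -/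
/-- `Labels d u v d'`: the sentential form `u` consists of variables of `G` only, and `v` is
obtained from it by labelling these variables along a path of states from `d` to `d'`, each variable
`A` becoming `(e, A, e')` for consecutive states `e`, `e'`. A form that contains a terminal has no
labelling. -/
inductive Labels {T N D : Type} :
    D → List (Symbol T N) → List (Symbol T (D × N × D)) → D → Prop
  | nil (d : D) : Labels d [] [] d
  | cons {d e d' : D} (A : N) {u : List (Symbol T N)} {v : List (Symbol T (D × N × D))} :
      Labels e u v d' →
      Labels d (Symbol.nonterminal A :: u) (Symbol.nonterminal (d, A, e) :: v) d'

theorem Labels.append {T N D : Type} {d e d' : D} {u₁ u₂ : List (Symbol T N)}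
    {v₁ v₂ : List (Symbol T (D × N × D))}
    (h₁ : Labels d u₁ v₁ e) (h₂ : Labels e u₂ v₂ d') :
    Labels d (u₁ ++ u₂) (v₁ ++ v₂) d' := by
  induction h₁ with
  | nil => exact h₂
  | cons A _ ih => exact .cons A (ih h₂)

theorem Labels.split {T N D : Type} {d d' : D} (u₁ : List (Symbol T N))
    {u₂ : List (Symbol T N)} {v : List (Symbol T (D × N × D))}
    (h : Labels d (u₁ ++ u₂) v d') :
    ∃ e v₁ v₂, v = v₁ ++ v₂ ∧ Labels d u₁ v₁ e ∧ Labels e u₂ v₂ d' := by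
  induction u₁ generalizing d v with
  | nil => exact ⟨d, [], v, rfl, .nil d, h⟩
  | cons s u₁ ih =>
    rw [List.cons_append] at h
    cases h with
    | cons A h =>
      obtain ⟨e, v₁, v₂, rfl, h₁, h₂⟩ := ih h
      exact ⟨e, _ :: v₁, v₂, rfl, .cons A h₁, h₂⟩

/-- If the right-hand side `w` of a production `A → w` of `G` is labelled as `v` along a path from
`d` to `d'`, then `[dAd'] → v` is a production of `G^r`. The productions `A → a` contribute nothing,
as a terminal has no labelling. -/
theorem Labels.mem_productGrammar {T N D : Type} {G : CFG' T N} (hG : G.NormalForm)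
    (R : CFG' T D) {A : N} {w : List (Symbol T N)} (hA : (A, w) ∈ G.P)
    {d d' : D} {v : List (Symbol T (D × N × D))} (h : Labels d w v d') :
    ((d, A, d'), v) ∈ (productGrammar G R).P := by
  rcases hG _ hA with ⟨B, C, hw⟩ | ⟨a, hw⟩ | hw <;> dsimp only at hw <;> subst hw
  · cases h with
    | cons _ h =>
      cases h with
      | cons _ h =>
        cases h
        exact Or.inr (Or.inr ⟨A, B, C, _, _, _, hA, rfl⟩)
  · cases h
  · cases h
    exact Or.inl ⟨A, _, hA, rfl⟩

/-- A labelling can be pulled back along a step of `G`. -/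
theorem Labels.exists_step {T N D : Type} {G : CFG' T N} (hG : G.NormalForm)
    (R : CFG' T D) {u u' : List (Symbol T N)} (hs : G.Step u u') {d d' : D}
    {v' : List (Symbol T (D × N × D))} (h : Labels d u' v' d') :
    ∃ v, Labels d u v d' ∧ (productGrammar G R).Step v v' := by
  obtain ⟨y, z, hA⟩ := hs
  obtain ⟨e', _, vz, rfl, h, hz⟩ := h.split
  obtain ⟨e, vy, vw, rfl, hy, hw⟩ := h.split
  exact ⟨_, (hy.append (.cons _ (.nil e'))).append hz,
    .step vy vz (hw.mem_productGrammar hG R hA)⟩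

theorem exists_labels_derives {T N D : Type} {G : CFG' T N} (hG : G.NormalForm)
    (R : CFG' T D) {u : List (Symbol T N)} {X : N}
    (h : G.Derives u [Symbol.nonterminal X]) (d d' : D) :
    ∃ v, Labels d u v d' ∧ (productGrammar G R).Derives v [Symbol.nonterminal (d, X, d')] := by
  induction h using Relation.ReflTransGen.head_induction_on with
  | refl => exact ⟨_, .cons X (.nil d'), .refl⟩
  | head hs _ ih =>
    obtain ⟨v', hv', hd⟩ := ih
    obtain ⟨v, hv, hstep⟩ := hv'.exists_step hG R hs
    exact ⟨v, hv, .head hstep hd⟩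

/-- If `X0 ⇒*_G X`, `X ⇒*_G w` for a terminal word `w`, and `[dXd'] ⇒*_{G^r} w`,
then `[dX0d'] ⇒*_{G^r} w`. -/
theorem productGrammar_derives_lift {T N D : Type} [Fintype T] [Fintype N] [Fintype D]
    (G : CFG' T N) (hG : G.NormalForm) (hGfin : G.P.Finite)
    (R : CFG' T D) (hR : R.RegularForm) (hRfin : R.P.Finite)
    (X0 X : N) (w : List T) (d d' : D)
    (h1 : G.Derives [Symbol.nonterminal X0] [Symbol.nonterminal X])
    (h2 : G.Derives [Symbol.nonterminal X] (w.map Symbol.terminal))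
    (h3 : (productGrammar G R).Derives
        [Symbol.nonterminal (d, X, d')] (w.map Symbol.terminal)) :
    (productGrammar G R).Derives
      [Symbol.nonterminal (d, X0, d')] (w.map Symbol.terminal) := by
  obtain ⟨v, hv, hd⟩ := exists_labels_derives hG R h1 d d'
  -- The only labelling of `X0` from `d` to `d'` is `[dX0d']`.
  cases hv with
  | cons _ hv =>
    cases hv
    exact Relation.ReflTransGen.trans hd h3
end

section
/- For every initialized Petri net (N, m_ι) and every marking m_f of N: (a) there exist a Boolean initialized Petri net (N', m'_ι) and a Boolean marking m'_f such that m_f is reachable in (N, m_ι) if and only if m'_f is reachable in (N', m'_ι); and (b) there exist a Boolean initialized Petri net (N'', m''_ι) and a Boolean marking m''_f such that m_f is coverable in (N, m_ι) if and only if m''_f is coverable in (N'', m''_ι). -/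
/-! Replace each place `s` by finitely many copies `(s, i)`, `i : Fin (K + 1)`, where `K` bounds the size
of `m0`, `mf` and of every `I t`, `O t`. A multiset `m` of size at most `K` then has a Boolean copy
`spread K m`, which puts the tokens of `s` on distinct copies of `s`. The net `split N K` has one
transition `t` from `spread K (I t)` to `spread K (O t)` for each transition `t` of `N`, together
with transitions moving one token between two copies of the same place.

Forgetting the copy index (`Multiset.map Prod.fst`) sends firings of `split N K` to firings of `N` or
to identities (`Reach.map_fst`). Conversely, any two markings with the same image are reachable
from one another by moves (`reach_of_map_fst_eq`), so before simulating `t` its input tokens can be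
brought to the positions `spread K (I t)`; hence every firing sequence of `N` lifts, with arbitrary
lifts of its two end markings (`Reach.lift`). So the initial marking `spread K m0` and the target
`spread K mf` preserve reachability, and the same net and markings preserve coverability, because
any marking above `mf` has a lift above `spread K mf`. The construction does not depend on whether
`mf` is reachable or coverable.
-/

/-- A Petri net on places `S` and transitions `T`: input and output multisets. -/
structure PetriNet (S T : Type) where
  I : T → Multiset S
  O : T → Multiset S

namespace PetriNet

variable {S T : Type}

/-- `t` is enabled at `m` and firing it yields `m'`. -/
def Fire (N : PetriNet S T) (t : T) (m m' : Multiset S) : Prop :=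
  N.I t ≤ m ∧ m' + N.I t = m + N.O t

/-- Firing a finite sequence of transitions. -/
inductive FireSeq (N : PetriNet S T) : List T → Multiset S → Multiset S → Prop
  | nil (m : Multiset S) : FireSeq N [] m m
  | cons {t : T} {w : List T} {m m1 m' : Multiset S} :
      N.Fire t m m1 → FireSeq N w m1 m' → FireSeq N (t :: w) m m'

/-- `m` is reachable from `m0`. -/
def Reach (N : PetriNet S T) (m0 m : Multiset S) : Prop :=
  ∃ w : List T, N.FireSeq w m0 m

/-- `m` is coverable from `m0`. -/
def Coverable (N : PetriNet S T) (m0 m : Multiset S) : Prop :=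
  ∃ m' : Multiset S, N.Reach m0 m' ∧ m ≤ m'

/-- The initialized net `(N, m0)` is bounded: finitely many reachable markings. -/
def Bounded (N : PetriNet S T) (m0 : Multiset S) : Prop :=
  {m : Multiset S | N.Reach m0 m}.Finite

end PetriNet

/-- A marking is Boolean iff every multiplicity is at most one. -/
def BooleanMarking {S : Type} (m : Multiset S) : Prop := m.Nodup

/-- An initialized Petri net is Boolean iff the initial marking and all the `I(t)`, `O(t)`
are Boolean. -/
def BooleanNet {S T : Type} (N : PetriNet S T) (m0 : Multiset S) : Prop :=
  BooleanMarking m0 ∧ ∀ t : T, BooleanMarking (N.I t) ∧ BooleanMarking (N.O t)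

namespace PetriNet

variable {S T : Type}

theorem Reach.refl (N : PetriNet S T) (m : Multiset S) : N.Reach m m := ⟨[], .nil m⟩

theorem Reach.head {N : PetriNet S T} {t : T} {m m₁ m₂ : Multiset S}
    (h : N.Fire t m m₁) (h' : N.Reach m₁ m₂) : N.Reach m m₂ := by
  obtain ⟨w, hw⟩ := h'
  exact ⟨t :: w, .cons h hw⟩

theorem Reach.trans {N : PetriNet S T} {m m₁ m₂ : Multiset S}
    (h : N.Reach m m₁) (h' : N.Reach m₁ m₂) : N.Reach m m₂ := by
  obtain ⟨w, hw⟩ := h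
  induction hw with
  | nil => exact h'
  | cons hf _ ih => exact .head hf (ih h')

/-- Firing `t` replaces `I t` by `O t` in any context `r`. -/
theorem fire_add (N : PetriNet S T) (t : T) (r : Multiset S) :
    N.Fire t (r + N.I t) (r + N.O t) :=
  ⟨Multiset.le_add_left _ _, by abel⟩

theorem Fire.exists_rest {N : PetriNet S T} {t : T} {m m' : Multiset S} (h : N.Fire t m m') :
    ∃ r, m = r + N.I t ∧ m' = r + N.O t := by
  obtain ⟨r, rfl⟩ := Multiset.le_iff_exists_add.1 h.1
  refine ⟨r, add_comm _ _, add_right_cancel (b := N.I t) ?_⟩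
  rw [h.2]
  abel

/-- Monotonicity: a firing sequence stays fireable when tokens are added. -/
theorem Reach.add_right {N : PetriNet S T} {m m' : Multiset S} (h : N.Reach m m')
    (r : Multiset S) : N.Reach (m + r) (m' + r) := by
  obtain ⟨w, hw⟩ := h
  induction hw with
  | nil => exact .refl _ _
  | cons hf _ ih =>
    refine .head ⟨hf.1.trans (Multiset.le_add_right _ _), ?_⟩ ih
    rw [add_right_comm, hf.2, add_right_comm]

open Classical in
/-- The Boolean copy of `m`: the `k`-th token of `s` is put on the copy `(s, k)` of `s`. The index is
taken modulo `K + 1`, so this is Boolean only when `m` has at most `K + 1` tokens on each place. -/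
noncomputable def spread (K : ℕ) (m : Multiset S) : Multiset (S × Fin (K + 1)) :=
  m.toEnumFinset.val.map fun p => (p.1, Fin.ofNat (K + 1) p.2)

theorem map_fst_spread (K : ℕ) (m : Multiset S) : (spread K m).map Prod.fst = m := by
  classical
  simp only [spread, Multiset.map_map, Function.comp_def]
  convert Multiset.map_toEnumFinset_fst m

theorem nodup_spread {K : ℕ} {m : Multiset S} (h : m.card ≤ K) : (spread K m).Nodup := by
  classical
  unfold spread
  refine Multiset.Nodup.map_on ?_ (Finset.nodup _)
  rintro ⟨a, i⟩ hi ⟨b, j⟩ hj hij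
  simp only [Finset.mem_val, Multiset.mem_toEnumFinset] at hi hj
  simp only [Prod.mk.injEq, Fin.ext_iff, Fin.val_ofNat] at hij
  have h₁ := Multiset.count_le_card a m
  have h₂ := Multiset.count_le_card b m
  rw [Nat.mod_eq_of_lt (by omega), Nat.mod_eq_of_lt (by omega)] at hij
  simpa using hij

/-- The net with `K + 1` copies of each place of `N`: `inl t` is the Boolean copy of `t`, and
`inr (s, i, j)` moves a token from the copy `(s, i)` to the copy `(s, j)`. -/
noncomputable def split (N : PetriNet S T) (K : ℕ) :
    PetriNet (S × Fin (K + 1)) (T ⊕ S × Fin (K + 1) × Fin (K + 1)) where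
  I := Sum.elim (fun t => spread K (N.I t)) fun p => {(p.1, p.2.1)}
  O := Sum.elim (fun t => spread K (N.O t)) fun p => {(p.1, p.2.2)}

theorem booleanNet_split {N : PetriNet S T} {K : ℕ} {m0 : Multiset S} (h0 : m0.card ≤ K)
    (hN : ∀ t, (N.I t).card ≤ K ∧ (N.O t).card ≤ K) :
    BooleanNet (N.split K) (spread K m0) := by
  refine ⟨nodup_spread h0, ?_⟩
  rintro (t | p)
  · exact ⟨nodup_spread (hN t).1, nodup_spread (hN t).2⟩
  · exact ⟨Multiset.nodup_singleton _, Multiset.nodup_singleton _⟩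

theorem Reach.map_fst {N : PetriNet S T} {K : ℕ} {P Q : Multiset (S × Fin (K + 1))}
    (h : (N.split K).Reach P Q) : N.Reach (P.map Prod.fst) (Q.map Prod.fst) := by
  obtain ⟨w, hw⟩ := h
  induction hw with
  | nil => exact .refl _ _
  | @cons t _ _ _ _ hf _ ih =>
    obtain ⟨r, rfl, rfl⟩ := hf.exists_rest
    rcases t with t | p
    · refine .head (t := t) ?_ ih
      simp only [split, Sum.elim_inl, Multiset.map_add, map_fst_spread]
      exact N.fire_add t _
    · simpa [split] using ih

/-- Tokens can be redistributed at will among the copies of each place. -/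
theorem reach_of_map_fst_eq (N : PetriNet S T) {K : ℕ} {P Q : Multiset (S × Fin (K + 1))}
    (h : P.map Prod.fst = Q.map Prod.fst) : (N.split K).Reach P Q := by
  induction P using Multiset.induction generalizing Q with
  | empty =>
    obtain rfl : Q = 0 := by simpa [eq_comm] using h
    exact .refl _ _
  | cons a P ih =>
    have ha : a.1 ∈ Q.map Prod.fst := by simp [← h]
    obtain ⟨b, hb, hba⟩ := Multiset.mem_map.1 ha
    obtain ⟨Q, rfl⟩ := Multiset.exists_cons_of_mem hb
    have hPQ : P.map Prod.fst = Q.map Prod.fst := by simpa [hba] using h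
    have hmove := (N.split K).fire_add (.inr (a.1, a.2, b.2)) Q
    have h₁ := (ih hPQ).add_right {a}
    have h₂ := h₁.trans (.head hmove (.refl _ _))
    have hab : (a.1, b.2) = b := by rw [← hba]
    simpa [split, hab, add_comm _ ({_} : Multiset _)] using h₂

/-- A firing sequence of `N` is simulated by `N.split K` between any lifts of its end markings. -/
theorem Reach.lift {N : PetriNet S T} {K : ℕ} {P Q : Multiset (S × Fin (K + 1))}
    (h : N.Reach (P.map Prod.fst) (Q.map Prod.fst)) : (N.split K).Reach P Q := by
  obtain ⟨w, hw⟩ := h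
  generalize hm : P.map Prod.fst = m at hw
  generalize hm' : Q.map Prod.fst = m' at hw
  induction hw generalizing P with
  | nil => exact reach_of_map_fst_eq N (hm.trans hm'.symm)
  | @cons t _ _ _ _ hf _ ih =>
    obtain ⟨r, rfl, rfl⟩ := hf.exists_rest
    refine (reach_of_map_fst_eq N (Q := spread K r + spread K (N.I t)) ?_).trans
      (.head ((N.split K).fire_add (.inl t) (spread K r)) (ih ?_ hm'))
    · rw [hm, Multiset.map_add, map_fst_spread, map_fst_spread]
    · simp only [split, Sum.elim_inl, Multiset.map_add, map_fst_spread]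

theorem reach_split_iff (N : PetriNet S T) (K : ℕ) (m0 mf : Multiset S) :
    N.Reach m0 mf ↔ (N.split K).Reach (spread K m0) (spread K mf) := by
  refine ⟨fun h => .lift ?_, fun h => ?_⟩
  · rwa [map_fst_spread, map_fst_spread]
  · simpa only [map_fst_spread] using h.map_fst

theorem coverable_split_iff (N : PetriNet S T) (K : ℕ) (m0 mf : Multiset S) :
    N.Coverable m0 mf ↔ (N.split K).Coverable (spread K m0) (spread K mf) := by
  constructor
  · rintro ⟨m, hm, hle⟩
    obtain ⟨r, rfl⟩ := Multiset.le_iff_exists_add.1 hle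
    refine ⟨spread K mf + spread K r, .lift ?_, Multiset.le_add_right _ _⟩
    rwa [Multiset.map_add, map_fst_spread, map_fst_spread, map_fst_spread]
  · rintro ⟨P, hP, hle⟩
    refine ⟨P.map Prod.fst, ?_, ?_⟩
    · simpa only [map_fst_spread] using hP.map_fst
    · simpa only [map_fst_spread] using Multiset.map_le_map (f := Prod.fst) hle

end PetriNet

/-- For every initialized Petri net and marking `m_f`: (a) there is a Boolean initialized
Petri net and Boolean marking whose reachability is equivalent to that of `m_f`; and
(b) likewise for coverability. -/
theorem exists_boolean_net_reach_cover_equiv {S T : Type}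
    [Finite S] [Nonempty S] [Finite T] (N : PetriNet S T) (m0 mf : Multiset S) :
    (∃ (S' T' : Type) (_ : Finite S') (_ : Nonempty S') (_ : Finite T')
      (N' : PetriNet S' T') (m0' mf' : Multiset S'),
      BooleanNet N' m0' ∧ BooleanMarking mf' ∧
      (N.Reach m0 mf ↔ N'.Reach m0' mf')) ∧
    (∃ (S'' T'' : Type) (_ : Finite S'') (_ : Nonempty S'') (_ : Finite T'')
      (N'' : PetriNet S'' T'') (m0'' mf'' : Multiset S''),
      BooleanNet N'' m0'' ∧ BooleanMarking mf'' ∧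
      (N.Coverable m0 mf ↔ N''.Coverable m0'' mf'')) := by
  obtain ⟨A, hA⟩ := Finite.exists_le fun t => (N.I t).card
  obtain ⟨B, hB⟩ := Finite.exists_le fun t => (N.O t).card
  obtain ⟨K, h0, hf, hAK, hBK⟩ : ∃ K, m0.card ≤ K ∧ mf.card ≤ K ∧ A ≤ K ∧ B ≤ K :=
    ⟨m0.card + mf.card + A + B, by omega, by omega, by omega, by omega⟩
  have hbool : BooleanNet (N.split K) (PetriNet.spread K m0) :=
    PetriNet.booleanNet_split h0 fun t => ⟨(hA t).trans hAK, (hB t).trans hBK⟩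
  exact ⟨⟨_, _, inferInstance, inferInstance, inferInstance, N.split K, PetriNet.spread K m0,
      PetriNet.spread K mf, hbool, PetriNet.nodup_spread hf, PetriNet.reach_split_iff N K m0 mf⟩,
    ⟨_, _, inferInstance, inferInstance, inferInstance, N.split K, PetriNet.spread K m0,
      PetriNet.spread K mf, hbool, PetriNet.nodup_spread hf, PetriNet.coverable_split_iff N K m0 mf⟩⟩
end

section
/- Let G = (X, Σ, P, S) be an initialized CFG and let N_G be the Petri net with places X ∪ Σ, transitions P, and F(A → α) = ⟨{A}, Parikh(α)⟩ for each production (A → α) ∈ P (Parikh taken over X ∪ Σ). Then the set of markings reachable from the marking {S} in N_G equals {Parikh(α) | α ∈ (X ∪ Σ)* and S ⇒*_G α}. -/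
/-- The Petri net `N_G` of a CFG `G`: places are `X ∪ Σ` (i.e. symbols), transitions the
productions, with `F(A → α) = ⟨{A}, Parikh(α)⟩`. -/
def cfgNet {A N : Type} (G : CFG' A N) :
    PetriNet (Symbol A N) {p // p ∈ G.P} where
  I p := {Symbol.nonterminal p.1.1}
  O p := (p.1.2 : Multiset (Symbol A N))

theorem PetriNet.FireSeq.append {P T : Type} {N : PetriNet P T} {u v : List T}
    {m m1 m' : Multiset P} (h : N.FireSeq u m m1) (h' : N.FireSeq v m1 m') :
    N.FireSeq (u ++ v) m m' := by
  induction h with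
  | nil => exact h'
  | cons hf _ ih => exact .cons hf (ih h')

theorem fire_of_step {A N : Type} {G : CFG' A N} {α β : List (Symbol A N)} (h : G.Step α β) :
    ∃ t, (cfgNet G).Fire t (α : Multiset (Symbol A N)) (β : Multiset (Symbol A N)) := by
  obtain @⟨B, w, y, z, hp⟩ := h
  refine ⟨⟨(B, w), hp⟩, ?_, ?_⟩
  · simp [cfgNet]
  · simp only [cfgNet, ← Multiset.coe_add, ← Multiset.coe_singleton]
    abel

/-- Firings lift along the Parikh map, from any word with the given Parikh image. -/
theorem exists_step_of_fire {A N : Type} {G : CFG' A N} {t : {p // p ∈ G.P}}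
    {α : List (Symbol A N)} {m : Multiset (Symbol A N)}
    (h : (cfgNet G).Fire t (α : Multiset (Symbol A N)) m) :
    ∃ β : List (Symbol A N), G.Step α β ∧ (β : Multiset (Symbol A N)) = m := by
  obtain ⟨⟨⟨B, w⟩, hp⟩, hle, heq⟩ := t, h
  have hmem : Symbol.nonterminal B ∈ α := by simpa [cfgNet] using hle
  obtain ⟨y, z, rfl⟩ := List.append_of_mem hmem
  refine ⟨y ++ w ++ z, by simpa using CFG'.Step.step y z hp, ?_⟩
  -- Both sides become equal after adding back the consumed token.
  apply add_right_cancel (b := {Symbol.nonterminal B})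
  refine Eq.trans ?_ heq.symm
  simp only [cfgNet, ← Multiset.coe_add, ← Multiset.cons_coe, ← Multiset.singleton_add]
  abel

/-- A firing sequence from `Parikh α` lifts to a derivation from `α`. -/
theorem exists_derives_of_fireSeq {A N : Type} {G : CFG' A N} {w : List {p // p ∈ G.P}}
    {m m' : Multiset (Symbol A N)} (h : (cfgNet G).FireSeq w m m') :
    ∀ α : List (Symbol A N), (α : Multiset (Symbol A N)) = m →
      ∃ β : List (Symbol A N), G.Derives α β ∧ (β : Multiset (Symbol A N)) = m' := by
  induction h with
  | nil => exact fun α hα => ⟨α, .refl, hα⟩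
  | cons hf _ ih =>
    rintro α rfl
    obtain ⟨β, hβ, hm⟩ := exists_step_of_fire hf
    obtain ⟨γ, hγ, hm'⟩ := ih β hm
    exact ⟨γ, .head hβ hγ, hm'⟩

theorem reach_of_derives {A N : Type} {G : CFG' A N} {α β : List (Symbol A N)}
    (h : G.Derives α β) :
    (cfgNet G).Reach (α : Multiset (Symbol A N)) (β : Multiset (Symbol A N)) := by
  induction h with
  | refl => exact ⟨[], .nil _⟩
  | tail _ hs ih =>
    obtain ⟨w, hw⟩ := ih
    obtain ⟨t, ht⟩ := fire_of_step hs
    exact ⟨w ++ [t], hw.append (.cons ht (.nil _))⟩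

/-- The reachable markings of `(N_G, {S})` are exactly the Parikh images of the sentential
forms derivable from `S`. -/
theorem cfgNet_reachable_eq_parikh_sentential {A N : Type} [Fintype A] [Fintype N]
    (G : CFG' A N) (hfin : G.P.Finite) (S : N) :
    {m : Multiset (Symbol A N) | (cfgNet G).Reach {Symbol.nonterminal S} m} =
      {m : Multiset (Symbol A N) |
        ∃ α : List (Symbol A N),
          G.Derives [Symbol.nonterminal S] α ∧ (↑α : Multiset (Symbol A N)) = m} := by
  ext m
  constructor
  · rintro ⟨w, hw⟩
    exact exists_derives_of_fireSeq hw [Symbol.nonterminal S] (Multiset.coe_singleton _)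
  · rintro ⟨α, hα, rfl⟩
    exact reach_of_derives hα
end
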